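/- arXiv:1605.02485 — 2 statements merged into one kernel-verified Lean document; each statement's English description precedes it below -/
import Mathlib

section
/- Let T : ℍⁿ ⇉ V₁ be a maximal H-monotone set-valued map with dom(T) = ℍⁿ, and let λ > 0. Then the resolvent Q_λ is 1-Lipschitz continuous in the Hausdorff metric: for all v, v' ∈ ℝ²ⁿ and every η ∈ Q_λ(v) there exists η' ∈ Q_λ(v') such that d_H(η, η') ≤ ‖v − v'‖; in particular Q_λ(v') ⊆ Q_λ(v) + B_{ℍⁿ}(0, ‖v − v'‖). -/
open scoped RealInnerProductSpace Pointwise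

noncomputable section

abbrev E (n : ℕ) := EuclideanSpace ℝ (Fin n)
abbrev Heis (n : ℕ) := E n × E n × ℝ
abbrev V1 (n : ℕ) := WithLp 2 (E n × E n)

/-- The projection ξ₁(x,y,t) = (x,y) onto the first layer V₁ ≅ ℝ²ⁿ. -/
def xi1 {n : ℕ} (η : Heis n) : V1 n := (WithLp.equiv 2 (E n × E n)).symm (η.1, η.2.1)

/-- The horizontal plane through η₀. -/
def Hplane {n : ℕ} (η₀ : Heis n) : Set (Heis n) :=
  {η | η.2.2 = η₀.2.2 + 2 * (⟪η₀.2.1, η.1⟫ - ⟪η₀.1, η.2.1⟫)}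

/-- H-monotonicity of a set-valued map T : ℍⁿ ⇉ V₁. -/
def IsHMonotone {n : ℕ} (T : Heis n → Set (V1 n)) : Prop :=
  ∀ η η', η' ∈ Hplane η → ∀ v ∈ T η, ∀ v' ∈ T η', 0 ≤ ⟪v - v', xi1 η - xi1 η'⟫

/-- Maximal H-monotonicity. -/
def IsMaximalHMonotone {n : ℕ} (T : Heis n → Set (V1 n)) : Prop :=
  IsHMonotone T ∧
    ∀ η v, (∀ η' ∈ Hplane η, ∀ v' ∈ T η', 0 ≤ ⟪v - v', xi1 η - xi1 η'⟫) → v ∈ T η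

/-- Heisenberg group law. -/
def hmul {n : ℕ} (η η' : Heis n) : Heis n :=
  (η.1 + η'.1, η.2.1 + η'.2.1,
    η.2.2 + η'.2.2 + 2 * (⟪η'.1, η.2.1⟫ - ⟪η.1, η'.2.1⟫))

/-- Heisenberg group inverse. -/
def hinv {n : ℕ} (η : Heis n) : Heis n := (-η.1, -η.2.1, -η.2.2)

/-- The Korányi gauge N(x,y,t) = ((‖x‖²+‖y‖²)² + t²)^(1/4). -/
def gaugeN {n : ℕ} (η : Heis n) : ℝ :=
  ((‖η.1‖ ^ 2 + ‖η.2.1‖ ^ 2) ^ 2 + η.2.2 ^ 2) ^ ((1 : ℝ) / 4)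

/-- The Korányi–Cygan distance d_H(η,η') = N(η'⁻¹ ∘ η). -/
def dH {n : ℕ} (η η' : Heis n) : ℝ := gaugeN (hmul (hinv η') η)

/-- The resolventQ Q_λ = (ξ₁ + λT)⁻¹ : V₁ ⇉ ℍⁿ. -/
def resolventQ {n : ℕ} (T : Heis n → Set (V1 n)) (lam : ℝ) (v : V1 n) : Set (Heis n) :=
  {η | ∃ w ∈ T η, v = xi1 η + lam • w}

/-! On the horizontal plane through `η`, the distance `d_H(η, ·)` is the Euclidean distance of the
projections, so monotonicity along that plane makes the resolvent a contraction there, exactly as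
for Minty's resolvent. What remains is to solve `v' ∈ ξ₁ ζ + λ T ζ` with `ζ` on the plane of `η`.

The difficulty is that `T` is monotone only between the centre of the plane and its other points,
not along the plane itself, so Minty's theorem does not apply there. Monotonicity from the centre
does make `φ = ξ₁ + λ σ - v'` coercive on the plane for any selection `σ` of `T`, and a coercive
map, however discontinuous, has a generalized zero: a point near which no direction `d` satisfies
`⟪φ z, d⟫ > 0` for all `z`. Otherwise a partition of unity would produce a `C¹` field without zeros
that is the identity on a sphere, hence a retraction of a ball onto its boundary, which the volume
argument of Milnor and Rogers excludes: if `g` vanishes on the sphere, the integral over the ball of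
the Jacobian determinant of `x ↦ x + t g x` is polynomial in `t` and, being the volume of the image,
constant for small `t`, hence constant.

Finally, `T` is locally bounded and closed enough for a generalized zero to be a genuine one, by
maximality. Two points that are not on a common horizontal plane are compared here through a third
point: the horizontal planes through three points in general position meet. -/

section NoRetraction

open Filter MeasureTheory Metric Polynomial Set Topology

section Lipschitz

variable {V F : Type*} [NormedAddCommGroup V] [NormedSpace ℝ V] [NormedAddCommGroup F]

theorem exists_mem_segment_mem_frontier {s : Set V} {x y : V} (hx : x ∈ s) (hy : y ∉ s) :
    ∃ z ∈ segment ℝ x y, z ∈ frontier s := by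
  by_contra! hfr
  have hcover : segment ℝ x y ⊆ interior s ∪ (closure s)ᶜ := fun z hz ↦ by
    by_contra hz'
    simp only [mem_union, mem_compl_iff, not_or, not_not] at hz'
    exact hfr z hz ⟨hz'.2, hz'.1⟩
  have hdisj : Disjoint (interior s) (closure s)ᶜ :=
    disjoint_compl_right_iff_subset.2 (interior_subset.trans subset_closure)
  have hx' : x ∈ interior s :=
    (hcover (left_mem_segment ℝ x y)).resolve_right fun h ↦ h (subset_closure hx)
  have hsub := (convex_segment x y).isPreconnected.subset_left_of_subset_union isOpen_interior
    isClosed_closure.isOpen_compl hdisj hcover ⟨x, left_mem_segment ℝ x y, hx'⟩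
  exact hy (interior_subset (hsub (right_mem_segment ℝ x y)))

theorem lipschitzWith_indicator_of_eqOn_frontier_zero {s : Set V} {g : V → F} {K : NNReal}
    (hg : LipschitzOnWith K g (closure s)) (hfr : EqOn g 0 (frontier s)) :
    LipschitzWith K (s.indicator g) := by
  have hcross : ∀ x ∈ s, ∀ y ∉ s, ‖g x‖ ≤ K * dist x y := by
    intro x hx y hy
    obtain ⟨z, hz, hzs⟩ := exists_mem_segment_mem_frontier hx hy
    calc ‖g x‖ = dist (g x) (g z) := by simp [hfr hzs]
      _ ≤ K * dist x z := hg.dist_le_mul _ (subset_closure hx) _ (frontier_subset_closure hzs)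
      _ ≤ K * dist x y := by
        gcongr
        linarith [dist_add_dist_of_mem_segment hz, dist_nonneg (x := z) (y := y)]
  refine LipschitzWith.of_dist_le_mul fun x y ↦ ?_
  by_cases hx : x ∈ s <;> by_cases hy : y ∈ s
  · simpa only [indicator_of_mem, hx, hy] using
      hg.dist_le_mul _ (subset_closure hx) _ (subset_closure hy)
  · simpa [hx, hy] using hcross x hx y hy
  · simpa [hx, hy, dist_comm x y] using hcross y hy x hx
  · simpa [hx, hy] using mul_nonneg K.coe_nonneg dist_nonneg

theorem bijective_add_of_lipschitzWith [CompleteSpace V] {h : V → V} {K : NNReal}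
    (hh : LipschitzWith K h) (hK : K < 1) : Function.Bijective fun x ↦ x + h x := by
  rcases subsingleton_or_nontrivial V with hV | hV
  · exact ⟨Function.injective_of_subsingleton _, fun y ↦ ⟨y, Subsingleton.elim _ _⟩⟩
  have happrox : ApproximatesLinearOn (fun x ↦ x + h x)
      (ContinuousLinearEquiv.refl ℝ V : V →L[ℝ] V) univ K := by
    refine LipschitzOnWith.approximatesLinearOn ?_
    convert hh.lipschitzOnWith (s := univ)
    ext x
    simp
  have hKsymm : K < ‖((ContinuousLinearEquiv.refl ℝ V).symm : V →L[ℝ] V)‖₊⁻¹ := by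
    simpa using hK
  exact ⟨injOn_univ.1 (happrox.injOn (.inr hKsymm)), happrox.surjective (.inr hKsymm)⟩

theorem bijOn_add_of_lipschitzWith [CompleteSpace V] {h : V → V} {K : NNReal} {s : Set V}
    (hh : LipschitzWith K h) (hK : K < 1) (hs : EqOn h 0 sᶜ) :
    BijOn (fun x ↦ x + h x) s s := by
  have hbij := bijective_add_of_lipschitzWith hh hK
  have hid : ∀ x ∉ s, x + h x = x := fun x hx ↦ by simp [hs hx]
  refine ⟨fun x hx ↦ ?_, hbij.1.injOn, fun y hy ↦ ?_⟩
  · by_contra hx'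
    exact hx' (by rwa [hbij.1 (hid _ hx')])
  · obtain ⟨x, rfl⟩ := hbij.2 y
    by_contra hx'
    by_cases hx : x ∈ s
    · exact hx' ⟨x, hx, rfl⟩
    · exact hx (hid x hx ▸ hy)

end Lipschitz

section Polynomial

theorem exists_polynomial_eval_eq_det {R M : Type*} [CommRing R] [Nontrivial R] [AddCommGroup M]
    [Module R M] [Module.Free R M] [Module.Finite R M] (A : Module.End R M) :
    ∃ p : R[X], p.natDegree ≤ Module.finrank R M ∧
      ∀ t, p.eval t = LinearMap.det (LinearMap.id + t • A) := by
  let b := Module.finBasis R M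
  let a := LinearMap.toMatrix b b A
  refine ⟨((X : R[X]) • a.map C + 1).det, ?_, fun t ↦ ?_⟩
  · simpa using natDegree_det_X_add_C_le a 1
  · rw [← LinearMap.det_toMatrix b, map_add, map_smul, LinearMap.toMatrix_id,
      ← coe_evalRingHom, RingHom.map_det, map_add, map_one, add_comm]
    congr 2
    ext i j
    simp only [a, RingHom.mapMatrix_apply, Matrix.map_apply, Matrix.smul_apply, coe_evalRingHom,
      smul_eq_mul, eval_mul, eval_X, eval_C]

theorem exists_polynomial_eval_eq_integral {α : Type*} [MeasurableSpace α] {μ : Measure α}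
    {d : ℕ} {p : α → ℝ[X]} (hdeg : ∀ x, (p x).natDegree ≤ d)
    (hint : ∀ t, Integrable (fun x ↦ (p x).eval t) μ) :
    ∃ q : ℝ[X], ∀ t, q.eval t = ∫ x, (p x).eval t ∂μ := by
  let s := Finset.range (d + 1)
  have hinj : InjOn (Nat.cast : ℕ → ℝ) s := Nat.cast_injective.injOn
  refine ⟨Lagrange.interpolate s Nat.cast fun i ↦ ∫ x, (p x).eval (i : ℝ) ∂μ, fun t ↦ ?_⟩
  have hinterp : ∀ x, (p x).eval t =
      ∑ i ∈ s, (p x).eval (i : ℝ) * (Lagrange.basis s Nat.cast i).eval t := by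
    intro x
    have hlt : (p x).degree < s.card :=
      degree_le_natDegree.trans_lt <| by
        rw [Finset.card_range]
        exact_mod_cast Nat.lt_succ_of_le (hdeg x)
    conv_lhs => rw [Lagrange.eq_interpolate hinj hlt]
    simp only [Lagrange.interpolate_apply, eval_finsetSum, eval_mul, eval_C]
  simp only [hinterp, Lagrange.interpolate_apply, eval_finsetSum, eval_mul, eval_C,
    integral_finsetSum s fun i _ ↦ (hint i).mul_const _, integral_mul_const]

end Polynomial

section Volume

theorem eventually_det_id_add_smul_pos {V : Type*} [NormedAddCommGroup V] [NormedSpace ℝ V]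
    {K : Set V} (hK : IsCompact K)
    {A : V → V →L[ℝ] V} (hA : Continuous A) :
    ∀ᶠ t : ℝ in 𝓝 0, ∀ x ∈ K, 0 < (ContinuousLinearMap.id ℝ V + t • A x).det := by
  refine hK.eventually_forall_of_forall_eventually fun x _ ↦ ?_
  have hcont : Continuous fun z : ℝ × V ↦ (ContinuousLinearMap.id ℝ V + z.1 • A z.2).det :=
    ContinuousLinearMap.continuous_det.comp (by fun_prop)
  exact continuousAt_const.eventually_lt hcont.continuousAt (by simp [ContinuousLinearMap.det])

variable {V : Type*} [NormedAddCommGroup V] [NormedSpace ℝ V] [FiniteDimensional ℝ V]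
  {U : Set V}

theorem eventually_bijOn_add_smul (hb : Bornology.IsBounded U)
    {g : V → V} (hg : ContDiff ℝ 1 g) (hfr : EqOn g 0 (frontier U)) :
    ∀ᶠ t : ℝ in 𝓝 0, BijOn (fun x ↦ x + t • g x) U U := by
  have := FiniteDimensional.proper_real V
  obtain ⟨K, hK⟩ := (hg.locallyLipschitz.locallyLipschitzOn (s := closure U))
    |>.exists_lipschitzOnWith_of_compact hb.isCompact_closure
  have hsmall : ∀ᶠ t : ℝ in 𝓝 0, ‖t‖₊ * K < 1 := by
    have hcont : Continuous fun t : ℝ ↦ ‖t‖₊ * K := by fun_prop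
    exact hcont.continuousAt.eventually_lt continuousAt_const (by simp)
  filter_upwards [hsmall] with t ht
  have hlip : LipschitzWith (‖t‖₊ * K) (U.indicator (t • g)) :=
    lipschitzWith_indicator_of_eqOn_frontier_zero
      ((lipschitzWith_smul t).comp_lipschitzOnWith hK) fun x hx ↦ by simp [hfr hx]
  refine (bijOn_add_of_lipschitzWith hlip ht fun x hx ↦ indicator_of_notMem hx _).congr
    fun x hx ↦ ?_
  simp [hx]

variable [MeasurableSpace V] [BorelSpace V] (μ : Measure V) [μ.IsAddHaarMeasure]

theorem eventually_setIntegral_det_id_add_smul_fderiv (hU : IsOpen U)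
    (hb : Bornology.IsBounded U) {g : V → V} (hg : ContDiff ℝ 1 g)
    (hfr : EqOn g 0 (frontier U)) :
    ∀ᶠ t : ℝ in 𝓝 0,
      ∫ x in U, (ContinuousLinearMap.id ℝ V + t • fderiv ℝ g x).det ∂μ = μ.real U := by
  have := FiniteDimensional.proper_real V
  filter_upwards [eventually_bijOn_add_smul hb hg hfr, eventually_det_id_add_smul_pos
    hb.isCompact_closure (hg.continuous_fderiv one_ne_zero)] with t hbij hpos
  have hderiv : ∀ x ∈ U, HasFDerivWithinAt (fun x ↦ x + t • g x)
      (ContinuousLinearMap.id ℝ V + t • fderiv ℝ g x) U x := fun x _ ↦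
    ((hasFDerivAt_id x).add
      ((hg.differentiable one_ne_zero x).hasFDerivAt.const_smul t)).hasFDerivWithinAt
  calc ∫ x in U, (ContinuousLinearMap.id ℝ V + t • fderiv ℝ g x).det ∂μ
      = ∫ x in U, |(ContinuousLinearMap.id ℝ V + t • fderiv ℝ g x).det| • (1 : ℝ) ∂μ :=
        setIntegral_congr_fun hU.measurableSet fun x hx ↦ by
          simp [abs_of_pos (hpos x (subset_closure hx))]
    _ = ∫ _ in (fun x ↦ x + t • g x) '' U, (1 : ℝ) ∂μ :=
        (integral_image_eq_integral_abs_det_fderiv_smul μ hU.measurableSet hderiv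
          hbij.injOn fun _ ↦ 1).symm
    _ = μ.real U := by rw [hbij.image_eq]; simp

theorem setIntegral_det_id_add_smul_fderiv (hU : IsOpen U)
    (hb : Bornology.IsBounded U) {g : V → V} (hg : ContDiff ℝ 1 g)
    (hfr : EqOn g 0 (frontier U)) (t : ℝ) :
    ∫ x in U, (ContinuousLinearMap.id ℝ V + t • fderiv ℝ g x).det ∂μ = μ.real U := by
  have := FiniteDimensional.proper_real V
  choose p hdeg heval using fun x ↦
    exists_polynomial_eval_eq_det (fderiv ℝ g x : V →ₗ[ℝ] V)
  have hp : ∀ x t, (p x).eval t = (ContinuousLinearMap.id ℝ V + t • fderiv ℝ g x).det := heval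
  have hint : ∀ t, IntegrableOn (fun x ↦ (p x).eval t) U μ := by
    intro t
    simp only [hp]
    have hcont : Continuous fun x ↦ (ContinuousLinearMap.id ℝ V + t • fderiv ℝ g x).det :=
      ContinuousLinearMap.continuous_det.comp
        (continuous_const.add ((hg.continuous_fderiv one_ne_zero).const_smul t))
    exact (hcont.continuousOn.integrableOn_compact hb.isCompact_closure).mono_set subset_closure
  obtain ⟨q, hq⟩ := exists_polynomial_eval_eq_integral hdeg hint
  have hconst : q = C (μ.real U) := by
    refine eq_of_infinite_eval_eq _ _ (infinite_of_mem_nhds 0 ?_)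
    filter_upwards [eventually_setIntegral_det_id_add_smul_fderiv μ hU hb hg hfr] with s hs
    simpa only [mem_ofPred_eq, hq, hp, eval_C] using hs
  simp only [← hp, ← hq, hconst, eval_C]

end Volume

theorem det_fderiv_eq_zero_of_interior_image_eq_empty {V : Type*} [NormedAddCommGroup V]
    [NormedSpace ℝ V] [FiniteDimensional ℝ V] {U : Set V} (hU : IsOpen U) {r : V → V}
    (hr : ContDiff ℝ 1 r) (hint : interior (r '' U) = ∅) {x : V} (hx : x ∈ U) :
    (fderiv ℝ r x).det = 0 := by
  have := FiniteDimensional.complete ℝ V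
  by_contra hdet
  have hrange : (fderiv ℝ r x : V →ₗ[ℝ] V).range = ⊤ :=
    LinearMap.isUnit_iff_range_eq_top _ |>.1 <|
      LinearMap.isUnit_iff_isUnit_det _ |>.2 (isUnit_iff_ne_zero.2 hdet)
  have hmap := (hr.contDiffAt.hasStrictFDerivAt one_ne_zero).map_nhds_eq_of_surj hrange
  have hmem : r x ∈ interior (r '' U) :=
    mem_interior_iff_mem_nhds.2 (hmap ▸ image_mem_map (hU.mem_nhds hx))
  simp [hint] at hmem

theorem interior_image_nonempty_of_eqOn_frontier_id {V : Type*} [NormedAddCommGroup V]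
    [NormedSpace ℝ V] [FiniteDimensional ℝ V] {U : Set V} (hU : IsOpen U)
    (hb : Bornology.IsBounded U) (hne : U.Nonempty) {r : V → V} (hr : ContDiff ℝ 1 r)
    (hfr : EqOn r id (frontier U)) : (interior (r '' U)).Nonempty := by
  let : MeasurableSpace V := borel V
  have : BorelSpace V := ⟨rfl⟩
  let μ : Measure V := Measure.addHaar
  by_contra hempty
  have hdet : ∀ x ∈ U,
      (ContinuousLinearMap.id ℝ V + (1 : ℝ) • fderiv ℝ (r - id) x).det = 0 := by
    intro x hx
    rw [one_smul, fderiv_sub (hr.differentiable one_ne_zero x) differentiableAt_id, fderiv_id,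
      add_sub_cancel]
    exact det_fderiv_eq_zero_of_interior_image_eq_empty hU hr
      (not_nonempty_iff_eq_empty.1 hempty) hx
  have hvol := setIntegral_det_id_add_smul_fderiv μ hU hb (g := r - id)
    (hr.sub contDiff_id) (fun x hx ↦ by simp [hfr hx]) 1
  rw [setIntegral_eq_zero_of_forall_eq_zero hdet] at hvol
  exact (ENNReal.toReal_pos (hU.measure_pos μ hne).ne' hb.measure_lt_top.ne).ne hvol

end NoRetraction

section GeneralizedZero

open Filter Metric Set Topology

variable {V : Type*} [NormedAddCommGroup V] [InnerProductSpace ℝ V] [FiniteDimensional ℝ V]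

theorem exists_eq_zero_of_eqOn_sphere_id {D : V → V} {R : ℝ} (hR : 0 < R)
    (hD : ContDiff ℝ 1 D) (hDR : EqOn D id (sphere 0 R)) : ∃ x, D x = 0 := by
  by_contra! hne
  let r : V → V := fun x ↦ (R / ‖D x‖) • D x
  have hr : ContDiff ℝ 1 r :=
    (contDiff_const.div (hD.norm ℝ hne) fun x ↦ norm_ne_zero_iff.2 (hne x)).smul hD
  have hsphere : ∀ x, r x ∈ sphere (0 : V) R := fun x ↦ by
    simp [r, norm_smul, abs_of_pos hR, hne x]
  have hid : EqOn r id (frontier (ball 0 R)) := by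
    intro x hx
    rw [frontier_ball 0 hR.ne'] at hx
    simp [r, hDR hx, mem_sphere_zero_iff_norm.1 hx, hR.ne']
  have hempty : interior (r '' ball 0 R) ⊆ ∅ := by
    rw [← interior_sphere (0 : V) hR.ne']
    exact interior_mono (image_subset_iff.2 fun x _ ↦ hsphere x)
  exact (interior_image_nonempty_of_eqOn_frontier_id isOpen_ball isBounded_ball
    (nonempty_ball.2 hR) hr hid).ne_empty (subset_empty_iff.1 hempty)

theorem exists_contDiff_inner_pos {φ : V → V} {R : ℝ}
    (hout : ∀ x ∈ sphere (0 : V) R, ∀ᶠ z in 𝓝 x, 0 < ⟪φ z, z⟫)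
    (hin : ∀ x ∈ ball (0 : V) R, ∃ d, ∀ᶠ z in 𝓝 x, 0 < ⟪φ z, d⟫) :
    ∃ D : V → V, ContDiff ℝ 1 D ∧ (∀ x, R ≤ ‖x‖ → D x = x) ∧
      ∀ x ∈ ball (0 : V) R, 0 < ⟪φ x, D x⟫ := by
  let t : V → Set V := fun x ↦ {d | (‖x‖ < R → 0 < ⟪φ x, d⟫) ∧ (R ≤ ‖x‖ → d = x)}
  have hconv : ∀ x, Convex ℝ (t x) := by
    intro x
    refine Convex.inter (s := {d | ‖x‖ < R → 0 < ⟪φ x, d⟫}) (t := {d | R ≤ ‖x‖ → d = x}) ?_ ?_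
    · by_cases hx : ‖x‖ < R
      · simpa [hx] using convex_halfSpace_gt (innerSL ℝ (φ x)).isLinear 0
      · simpa [hx] using convex_univ
    · by_cases hx : R ≤ ‖x‖
      · simp [hx]
      · simpa [hx] using convex_univ
  have hloc : ∀ x, ∃ N ∈ 𝓝 x, ∃ g : V → V,
      ContMDiffOn (modelWithCornersSelf ℝ V) (modelWithCornersSelf ℝ V) 1 g N ∧
        ∀ z ∈ N, g z ∈ t z := by
    intro x
    rcases lt_trichotomy ‖x‖ R with hx | hx | hx
    · obtain ⟨d, hd⟩ := hin x (mem_ball_zero_iff.2 hx)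
      refine ⟨_, hd.and (continuous_norm.continuousAt.eventually_lt continuousAt_const hx),
        fun _ ↦ d, contMDiffOn_const, fun z hz ↦ ⟨fun _ ↦ hz.1, fun h ↦ ?_⟩⟩
      exact absurd hz.2 h.not_gt
    · exact ⟨_, hout x (mem_sphere_zero_iff_norm.2 hx), id, contMDiffOn_id,
        fun z hz ↦ ⟨fun _ ↦ hz, fun _ ↦ rfl⟩⟩
    · refine ⟨_, continuousAt_const.eventually_lt continuous_norm.continuousAt hx, id,
        contMDiffOn_id, fun z hz ↦ ⟨fun h ↦ ?_, fun _ ↦ rfl⟩⟩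
      exact absurd hz h.not_gt
  obtain ⟨D, hD⟩ := exists_contMDiffMap_forall_mem_convex_of_local
    (modelWithCornersSelf ℝ V) hconv hloc
  exact ⟨D, D.contMDiff.contDiff, fun x ↦ (hD x).2,
    fun x hx ↦ (hD x).1 (mem_ball_zero_iff.1 hx)⟩

theorem exists_forall_frequently_inner_nonpos {φ : V → V} {R : ℝ} (hR : 0 < R)
    (hout : ∀ x ∈ sphere (0 : V) R, ∀ᶠ z in 𝓝 x, 0 < ⟪φ z, z⟫) :
    ∃ x ∈ ball (0 : V) R, ∀ d, ∃ᶠ z in 𝓝 x, ⟪φ z, d⟫ ≤ 0 := by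
  by_contra! hin
  obtain ⟨D, hD, hDout, hDin⟩ := exists_contDiff_inner_pos hout hin
  obtain ⟨x, hx⟩ := exists_eq_zero_of_eqOn_sphere_id hR hD
    fun x hx ↦ hDout x (mem_sphere_zero_iff_norm.1 hx).ge
  rcases lt_or_ge ‖x‖ R with hxR | hxR
  · simpa [hx] using hDin x (mem_ball_zero_iff.2 hxR)
  · have hx0 : x = 0 := (hDout x hxR).symm.trans hx
    simp only [hx0, norm_zero] at hxR
    exact hR.not_ge hxR

end GeneralizedZero

section HorizontalMonotonicity

open Filter Topology

variable {V : Type*} [NormedAddCommGroup V] [InnerProductSpace ℝ V]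

/-- The vertical coordinate of `p⁻¹ ∘ q` for the group law
`(a, t) ∘ (b, s) = (a + b, t + s + 2 * ⟪J a, b⟫)` on `V × ℝ`, where `J` is skew-symmetric.
The horizontal plane through `p` consists of the points `q` at which it vanishes. -/
def heightDefect (J : V →L[ℝ] V) (p q : V × ℝ) : ℝ := q.2 - p.2 - 2 * ⟪J p.1, q.1⟫

/-- The point above `p.1 + u` on the horizontal plane through `p`, which parametrizes that plane
by `u : V`. -/
def horizontalLift (J : V →L[ℝ] V) (p : V × ℝ) (u : V) : V × ℝ :=
  (p.1 + u, p.2 + 2 * ⟪J p.1, p.1 + u⟫)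

/-- H-monotonicity of a set-valued map on `V × ℝ`: monotonicity along each pair of points lying
on a common horizontal plane. -/
def IsHorizontallyMonotone (J : V →L[ℝ] V) (T : V × ℝ → Set V) : Prop :=
  ∀ p q, heightDefect J p q = 0 → ∀ v ∈ T p, ∀ w ∈ T q, 0 ≤ ⟪v - w, p.1 - q.1⟫

/-- Maximality among horizontally monotone maps, tested one point of the graph at a time. -/
def IsMaximalHorizontallyMonotone (J : V →L[ℝ] V) (T : V × ℝ → Set V) : Prop :=
  IsHorizontallyMonotone J T ∧
    ∀ p v, (∀ q, heightDefect J p q = 0 → ∀ w ∈ T q, 0 ≤ ⟪v - w, p.1 - q.1⟫) → v ∈ T p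

variable {J : V →L[ℝ] V} {T : V × ℝ → Set V}

theorem heightDefect_horizontalLift (p : V × ℝ) (u : V) :
    heightDefect J p (horizontalLift J p u) = 0 := by
  simp only [heightDefect, horizontalLift]
  ring

theorem horizontalLift_fst_sub (p : V × ℝ) (u : V) : (horizontalLift J p u).1 - p.1 = u :=
  add_sub_cancel_left p.1 u

theorem continuous_horizontalLift (p : V × ℝ) : Continuous (horizontalLift J p) := by
  unfold horizontalLift
  fun_prop

theorem continuous_heightDefect_left (q : V × ℝ) : Continuous fun p ↦ heightDefect J p q := by
  unfold heightDefect
  fun_prop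

theorem inner_map_swap_of_inner_map_self (hJ : ∀ x, ⟪J x, x⟫ = 0) (x y : V) :
    ⟪J x, y⟫ = -⟪J y, x⟫ := by
  have h := hJ (x + y)
  simp only [map_add, inner_add_left, inner_add_right, hJ, zero_add, add_zero] at h
  linarith

theorem exists_common_horizontal_point (hJ : ∀ x, ⟪J x, x⟫ = 0) {a p q : V × ℝ} {s r : ℝ}
    (hs : 2 * s * ⟪J (p.1 - a.1), q.1 - a.1⟫ = heightDefect J a q)
    (hr : 2 * r * ⟪J (p.1 - a.1), q.1 - a.1⟫ = -heightDefect J a p) :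
    ∃ z : V × ℝ, z.1 - a.1 = s • (p.1 - a.1) + r • (q.1 - a.1) ∧
      heightDefect J a z = 0 ∧ heightDefect J p z = 0 ∧ heightDefect J q z = 0 := by
  refine ⟨horizontalLift J a (s • (p.1 - a.1) + r • (q.1 - a.1)), horizontalLift_fst_sub _ _,
    heightDefect_horizontalLift _ _, ?_, ?_⟩ <;>
  · simp only [heightDefect, horizontalLift, map_sub, inner_add_right, inner_sub_left,
      inner_sub_right, real_inner_smul_right, hJ, inner_map_swap_of_inner_map_self hJ p.1 a.1,
      inner_map_swap_of_inner_map_self hJ q.1 a.1,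
      inner_map_swap_of_inner_map_self hJ q.1 p.1] at hs hr ⊢
    linarith

theorem IsHorizontallyMonotone.mul_inner_le (hT : IsHorizontallyMonotone J T) {a p q z : V × ℝ}
    (hz : (T z).Nonempty) (haz : heightDefect J a z = 0) (hpz : heightDefect J p z = 0)
    (hqz : heightDefect J q z = 0) {w wp wq : V} (hw : w ∈ T a) (hwp : wp ∈ T p) (hwq : wq ∈ T q)
    {α β γ : ℝ} (hα : 0 ≤ α) (hβ : 0 ≤ β) (hγ : 0 ≤ γ)
    (hbary : α • (z.1 - a.1) = β • (p.1 - z.1) + γ • (q.1 - z.1)) :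
    α * ⟪w, z.1 - a.1⟫ ≤ β * ⟪wp, p.1 - z.1⟫ + γ * ⟪wq, q.1 - z.1⟫ := by
  obtain ⟨wz, hwz⟩ := hz
  have ha : ⟪w, z.1 - a.1⟫ ≤ ⟪wz, z.1 - a.1⟫ := by
    have h := hT a z haz w hw wz hwz
    rw [← neg_sub z.1 a.1, inner_neg_right, inner_sub_left] at h
    linarith
  have hp : ⟪wz, p.1 - z.1⟫ ≤ ⟪wp, p.1 - z.1⟫ := by
    simpa only [inner_sub_left, sub_nonneg] using hT p z hpz wp hwp wz hwz
  have hq : ⟪wz, q.1 - z.1⟫ ≤ ⟪wq, q.1 - z.1⟫ := by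
    simpa only [inner_sub_left, sub_nonneg] using hT q z hqz wq hwq wz hwz
  calc α * ⟪w, z.1 - a.1⟫ ≤ α * ⟪wz, z.1 - a.1⟫ := by gcongr
    _ = β * ⟪wz, p.1 - z.1⟫ + γ * ⟪wz, q.1 - z.1⟫ := by
      simp only [← real_inner_smul_right, hbary, inner_add_right]
    _ ≤ β * ⟪wp, p.1 - z.1⟫ + γ * ⟪wq, q.1 - z.1⟫ := by gcongr

theorem IsHorizontallyMonotone.mul_inner_le_of_weights (hJ : ∀ x, ⟪J x, x⟫ = 0)
    (hT : IsHorizontallyMonotone J T) (hdom : ∀ p, (T p).Nonempty) {a p q : V × ℝ}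
    {w wp wq : V} (hw : w ∈ T a) (hwp : wp ∈ T p) (hwq : wq ∈ T q) {s r : ℝ}
    (hs : 2 * s * ⟪J (p.1 - a.1), q.1 - a.1⟫ = heightDefect J a q)
    (hr : 2 * r * ⟪J (p.1 - a.1), q.1 - a.1⟫ = -heightDefect J a p)
    (hs0 : 0 ≤ s) (hr0 : 0 ≤ r) (hsr : 0 ≤ 1 - s - r) {ζ : V}
    (hζ : ζ = s • (p.1 - a.1) + r • (q.1 - a.1)) :
    (1 - s - r) * ⟪w, ζ⟫ ≤ s * ⟪wp, p.1 - a.1 - ζ⟫ + r * ⟪wq, q.1 - a.1 - ζ⟫ := by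
  obtain ⟨z, hz, haz, hpz, hqz⟩ := exists_common_horizontal_point hJ hs hr
  rw [← hζ] at hz
  have hpz' : p.1 - z.1 = p.1 - a.1 - ζ := by rw [← hz]; abel
  have hqz' : q.1 - z.1 = q.1 - a.1 - ζ := by rw [← hz]; abel
  have hbary : (1 - s - r) • (z.1 - a.1) = s • (p.1 - z.1) + r • (q.1 - z.1) := by
    rw [hpz', hqz', hz, hζ]
    module
  simpa only [hz, hpz', hqz'] using
    hT.mul_inner_le (hdom z) haz hpz hqz hw hwp hwq hsr hs0 hr0 hbary

theorem eventually_inner_le_of_tendsto {α : Type*} {l : Filter α} {c : α → V} {B : α → ℝ} {u : V}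
    {b : ℝ} (hc : Tendsto c l (𝓝 u)) (hB : Tendsto B l (𝓝 b)) {ε : ℝ} (hε : 0 < ε) :
    ∀ᶠ x in l, ∀ w, ⟪w, c x⟫ ≤ B x → ⟪w, u⟫ ≤ b + ε * (1 + ‖w‖) := by
  filter_upwards [hc (Metric.ball_mem_nhds u hε), hB.eventually_lt_const (lt_add_of_pos_right b hε)]
    with x hcx hBx w hw
  calc ⟪w, u⟫ = ⟪w, c x⟫ + ⟪w, u - c x⟫ := by rw [← inner_add_right, add_sub_cancel]
    _ ≤ (b + ε) + ‖w‖ * ε := by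
      refine add_le_add (hw.trans hBx.le) ((real_inner_le_norm _ _).trans ?_)
      gcongr
      exact (mem_ball_iff_norm'.1 hcx).le
    _ = b + ε * (1 + ‖w‖) := by ring

theorem exists_tendsto_barycentric_weights {a₀ p q : V × ℝ} {κ : ℝ} (hκ : κ ≠ 0)
    (hp : heightDefect J a₀ p = 0) (hq : heightDefect J a₀ q = κ)
    (hpq : ⟪J (p.1 - a₀.1), q.1 - a₀.1⟫ = κ) :
    ∃ s r : V × ℝ → ℝ, Tendsto s (𝓝 a₀) (𝓝 (1 / 2)) ∧ Tendsto r (𝓝 a₀) (𝓝 0) ∧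
      ∀ᶠ a in 𝓝 a₀, 2 * s a * ⟪J (p.1 - a.1), q.1 - a.1⟫ = heightDefect J a q ∧
        2 * r a * ⟪J (p.1 - a.1), q.1 - a.1⟫ = -heightDefect J a p ∧
        (κ * heightDefect J a p ≤ 0 → 0 ≤ r a) := by
  let ω : V × ℝ → ℝ := fun a ↦ ⟪J (p.1 - a.1), q.1 - a.1⟫
  have hω : Tendsto ω (𝓝 a₀) (𝓝 κ) :=
    hpq ▸ (by fun_prop : Continuous ω).tendsto a₀
  have hq' : Tendsto (heightDefect J · q) (𝓝 a₀) (𝓝 κ) :=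
    hq ▸ (continuous_heightDefect_left q).tendsto a₀
  have hp' : Tendsto (heightDefect J · p) (𝓝 a₀) (𝓝 0) :=
    hp ▸ (continuous_heightDefect_left p).tendsto a₀
  have hκ2 : 2 * κ ≠ 0 := mul_ne_zero two_ne_zero hκ
  refine ⟨fun a ↦ heightDefect J a q / (2 * ω a), fun a ↦ -heightDefect J a p / (2 * ω a),
    ?_, ?_, ?_⟩
  · have hhalf : κ / (2 * κ) = 1 / 2 := by field_simp
    exact hhalf ▸ hq'.div (hω.const_mul 2) hκ2
  · have hzero : -(0 : ℝ) / (2 * κ) = 0 := by simp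
    exact hzero ▸ hp'.neg.div (hω.const_mul 2) hκ2
  · have hsign : Tendsto (fun a ↦ κ * ω a) (𝓝 a₀) (𝓝 (κ * κ)) := hω.const_mul κ
    filter_upwards [hsign.eventually_const_lt (mul_self_pos.2 hκ)] with a ha
    have hωa : ω a ≠ 0 := right_ne_zero_of_mul ha.ne'
    refine ⟨?_, ?_, fun h ↦ ?_⟩
    · change 2 * (heightDefect J a q / (2 * ω a)) * ω a = _
      field_simp
    · change 2 * (-heightDefect J a p / (2 * ω a)) * ω a = _
      field_simp
    · calc 0 ≤ -(κ * heightDefect J a p) / (2 * (κ * ω a)) :=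
            div_nonneg (neg_nonneg.2 h) (mul_nonneg zero_le_two ha.le)
        _ = -heightDefect J a p / (2 * ω a) := by field_simp

/-- Comparing `a` with the horizontal point `p` through a third point `q` off the plane: the point
`z` common to the three horizontal planes tends to the midpoint of `a₀` and `p`. -/
theorem IsHorizontallyMonotone.eventually_inner_le_of_mul_heightDefect_nonpos
    (hJ : ∀ x, ⟪J x, x⟫ = 0) (hT : IsHorizontallyMonotone J T) (hdom : ∀ p, (T p).Nonempty)
    {a₀ p q : V × ℝ} {κ : ℝ} (hκ : κ ≠ 0) (hp : heightDefect J a₀ p = 0)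
    (hq : heightDefect J a₀ q = κ) (hpq : ⟪J (p.1 - a₀.1), q.1 - a₀.1⟫ = κ) {wp : V}
    (hwp : wp ∈ T p) {ε : ℝ} (hε : 0 < ε) :
    ∀ᶠ a in 𝓝 a₀, κ * heightDefect J a p ≤ 0 →
      ∀ w ∈ T a, ⟪w, p.1 - a₀.1⟫ ≤ ⟪wp, p.1 - a₀.1⟫ + ε * (1 + ‖w‖) := by
  obtain ⟨wq, hwq⟩ := hdom q
  obtain ⟨s, r, hs, hr, hsr⟩ := exists_tendsto_barycentric_weights hκ hp hq hpq
  let ζ : V × ℝ → V := fun a ↦ s a • (p.1 - a.1) + r a • (q.1 - a.1)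
  have hsub : ∀ x : V × ℝ, Tendsto (fun a ↦ x.1 - a.1) (𝓝 a₀) (𝓝 (x.1 - a₀.1)) := fun x ↦
    (by fun_prop : Continuous fun a : V × ℝ ↦ x.1 - a.1).tendsto a₀
  have hζ : Tendsto ζ (𝓝 a₀) (𝓝 ((1 / 2 : ℝ) • (p.1 - a₀.1))) := by
    simpa using (hs.smul (hsub p)).add (hr.smul (hsub q))
  have hsum : Tendsto (fun a ↦ 1 - s a - r a) (𝓝 a₀) (𝓝 (1 / 2)) := by
    convert (hs.const_sub 1).sub hr using 2
    norm_num
  have hc : Tendsto (fun a ↦ (4 * (1 - s a - r a)) • ζ a) (𝓝 a₀) (𝓝 (p.1 - a₀.1)) := by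
    convert (hsum.const_mul 4).smul hζ using 2
    module
  have hB : Tendsto (fun a ↦ 4 * (s a * ⟪wp, p.1 - a.1 - ζ a⟫ + r a * ⟪wq, q.1 - a.1 - ζ a⟫))
      (𝓝 a₀) (𝓝 ⟪wp, p.1 - a₀.1⟫) := by
    convert ((hs.mul (tendsto_const_nhds.inner ((hsub p).sub hζ))).add
      (hr.mul (tendsto_const_nhds.inner ((hsub q).sub hζ)))).const_mul 4 using 2
    have hhalf : p.1 - a₀.1 - (1 / 2 : ℝ) • (p.1 - a₀.1) = (1 / 2 : ℝ) • (p.1 - a₀.1) := by module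
    rw [hhalf, real_inner_smul_right]
    ring
  filter_upwards [eventually_inner_le_of_tendsto hc hB hε, hsr,
    hs.eventually_const_lt one_half_pos, hsum.eventually_const_lt one_half_pos]
    with a hlim ⟨hsa, hra, hr0⟩ hs0 hsum0 hsign w hw
  have hle := hT.mul_inner_le_of_weights hJ hdom hw hwp hwq hsa hra hs0.le (hr0 hsign) hsum0.le
    (rfl : ζ a = _)
  refine hlim w ?_
  rw [real_inner_smul_right]
  linarith

theorem IsHorizontallyMonotone.eventually_inner_le_add_mul_norm (hJ : ∀ x, ⟪J x, x⟫ = 0)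
    (hJinj : Function.Injective J) (hT : IsHorizontallyMonotone J T)
    (hdom : ∀ p, (T p).Nonempty) {a₀ p : V × ℝ} (hp : heightDefect J a₀ p = 0) {wp : V}
    (hwp : wp ∈ T p) {ε : ℝ} (hε : 0 < ε) :
    ∀ᶠ a in 𝓝 a₀, ∀ w ∈ T a, ⟪w, p.1 - a₀.1⟫ ≤ ⟪wp, p.1 - a₀.1⟫ + ε * (1 + ‖w‖) := by
  set u := p.1 - a₀.1 with hu
  rcases eq_or_ne u 0 with hu0 | hu0
  · refine .of_forall fun a w _ ↦ ?_
    simp only [hu0, inner_zero_right, zero_add]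
    positivity
  have hJu : ‖J u‖ ^ 2 ≠ 0 :=
    pow_ne_zero 2 (norm_ne_zero_iff.2 ((map_ne_zero_iff J hJinj).2 hu0))
  have hside : ∀ e : ℝ, e ≠ 0 → ∀ᶠ a in 𝓝 a₀, e * ‖J u‖ ^ 2 * heightDefect J a p ≤ 0 →
      ∀ w ∈ T a, ⟪w, u⟫ ≤ ⟪wp, u⟫ + ε * (1 + ‖w‖) := by
    intro e he
    refine hT.eventually_inner_le_of_mul_heightDefect_nonpos hJ hdom (mul_ne_zero he hJu) hp
      (q := horizontalLift J a₀ (e • J u) + (0, e * ‖J u‖ ^ 2)) ?_ ?_ hwp hε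
    · simp only [heightDefect, horizontalLift, Prod.fst_add, Prod.snd_add, add_zero]
      ring
    · simp [horizontalLift, ← hu, real_inner_smul_right]
  filter_upwards [hside 1 one_ne_zero, hside (-1) (neg_ne_zero.2 one_ne_zero)] with a hpos hneg
  rcases le_total (heightDefect J a p) 0 with h | h
  · exact hpos (mul_nonpos_of_nonneg_of_nonpos (by positivity) h)
  · exact hneg (mul_nonpos_of_nonpos_of_nonneg (by simp) h)

theorem norm_le_norm_add_smul {x w : V} (hxw : 0 ≤ ⟪w, x⟫) {lam : ℝ} (hlam : 0 ≤ lam) :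
    ‖x‖ ≤ ‖x + lam • w‖ := by
  refine (pow_le_pow_iff_left₀ (norm_nonneg _) (norm_nonneg _) two_ne_zero).1 ?_
  rw [norm_add_sq_real, real_inner_smul_right, real_inner_comm]
  nlinarith [mul_nonneg hlam hxw, sq_nonneg ‖lam • w‖]

theorem exists_eventually_norm_le_of_inner_le [FiniteDimensional ℝ V] {α : Type*} {l : Filter α}
    {S : α → Set V}
    (h : ∀ u, ∃ C, ∀ ε > 0, ∀ᶠ x in l, ∀ w ∈ S x, ⟪w, u⟫ ≤ C + ε * (1 + ‖w‖)) :
    ∃ M, ∀ᶠ x in l, ∀ w ∈ S x, ‖w‖ ≤ M := by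
  choose C hC using h
  let b := stdOrthonormalBasis ℝ V
  let d : ℝ := Module.finrank ℝ V
  let K : ℝ := ∑ i, (|C (b i)| + |C (-b i)|)
  have hε : 0 < 1 / (2 * (d + 1)) := by positivity
  refine ⟨2 * K + 1, ?_⟩
  filter_upwards [eventually_all.2 fun i ↦ hC (b i) _ hε,
    eventually_all.2 fun i ↦ hC (-b i) _ hε] with x hpos hneg w hw
  have hcoord : ∀ i, |⟪b i, w⟫| ≤ (|C (b i)| + |C (-b i)|) + 1 / (2 * (d + 1)) * (1 + ‖w‖) := by
    intro i
    have h₁ := hpos i w hw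
    have h₂ := hneg i w hw
    rw [inner_neg_right] at h₂
    rw [real_inner_comm, abs_le]
    constructor <;> linarith [abs_nonneg (C (b i)), abs_nonneg (C (-b i)), le_abs_self (C (b i)),
      le_abs_self (C (-b i))]
  have hd : d * (1 / (2 * (d + 1))) ≤ 1 / 2 := by
    rw [mul_one_div, div_le_div_iff₀ (by positivity) two_pos]
    linarith
  have hnorm : ‖w‖ ≤ K + 1 / 2 * (1 + ‖w‖) :=
    calc ‖w‖ = ‖∑ i, ⟪b i, w⟫ • b i‖ := by rw [b.sum_repr' w]
      _ ≤ ∑ i, |⟪b i, w⟫| := by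
        refine (norm_sum_le _ _).trans_eq ?_
        simp [norm_smul]
      _ ≤ ∑ i, ((|C (b i)| + |C (-b i)|) + 1 / (2 * (d + 1)) * (1 + ‖w‖)) :=
        Finset.sum_le_sum fun i _ ↦ hcoord i
      _ = K + d * (1 / (2 * (d + 1))) * (1 + ‖w‖) := by
        simp [Finset.sum_add_distrib, K, d, mul_assoc]
      _ ≤ K + 1 / 2 * (1 + ‖w‖) := by gcongr
  linarith

variable [FiniteDimensional ℝ V]

theorem IsHorizontallyMonotone.exists_eventually_norm_le (hJ : ∀ x, ⟪J x, x⟫ = 0)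
    (hJinj : Function.Injective J) (hT : IsHorizontallyMonotone J T)
    (hdom : ∀ p, (T p).Nonempty) (a₀ : V × ℝ) : ∃ M, ∀ᶠ a in 𝓝 a₀, ∀ w ∈ T a, ‖w‖ ≤ M := by
  refine exists_eventually_norm_le_of_inner_le fun u ↦ ?_
  obtain ⟨wp, hwp⟩ := hdom (horizontalLift J a₀ u)
  refine ⟨⟪wp, u⟫, fun ε hε ↦ ?_⟩
  simpa only [horizontalLift_fst_sub] using
    hT.eventually_inner_le_add_mul_norm hJ hJinj hdom (heightDefect_horizontalLift a₀ u) hwp hε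

theorem IsHorizontallyMonotone.eventually_inner_lt (hJ : ∀ x, ⟪J x, x⟫ = 0)
    (hJinj : Function.Injective J) (hT : IsHorizontallyMonotone J T)
    (hdom : ∀ p, (T p).Nonempty) {a₀ p : V × ℝ} (hp : heightDefect J a₀ p = 0) {wp : V}
    (hwp : wp ∈ T p) {c : ℝ} (hc : ⟪wp, p.1 - a₀.1⟫ < c) :
    ∀ᶠ a in 𝓝 a₀, ∀ w ∈ T a, ⟪w, p.1 - a₀.1⟫ < c := by
  obtain ⟨M, hM⟩ := hT.exists_eventually_norm_le hJ hJinj hdom a₀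
  have hM0 : 0 < 2 + |M| := by positivity
  have hε : 0 < (c - ⟪wp, p.1 - a₀.1⟫) / (2 + |M|) := div_pos (sub_pos.2 hc) hM0
  filter_upwards [hM, hT.eventually_inner_le_add_mul_norm hJ hJinj hdom hp hwp hε]
    with a hMa hle w hw
  calc ⟪w, p.1 - a₀.1⟫
      ≤ ⟪wp, p.1 - a₀.1⟫ + (c - ⟪wp, p.1 - a₀.1⟫) / (2 + |M|) * (1 + ‖w‖) := hle w hw
    _ < ⟪wp, p.1 - a₀.1⟫ + (c - ⟪wp, p.1 - a₀.1⟫) / (2 + |M|) * (2 + |M|) := by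
      refine (add_lt_add_iff_left _).2 (mul_lt_mul_of_pos_left ?_ hε)
      linarith [hMa w hw, le_abs_self M]
    _ = c := by rw [div_mul_cancel₀ _ hM0.ne', add_sub_cancel]

theorem IsHorizontallyMonotone.eventually_inner_add_smul_sub_pos (hJ : ∀ x, ⟪J x, x⟫ = 0)
    (hJinj : Function.Injective J) (hT : IsHorizontallyMonotone J T)
    (hdom : ∀ p, (T p).Nonempty) {lam : ℝ} (hlam : 0 < lam) {a₀ p : V × ℝ}
    (hp : heightDefect J a₀ p = 0) {wp y : V} (hwp : wp ∈ T p)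
    (hpos : 0 < ⟪a₀.1 + lam • wp - y, a₀.1 - p.1⟫) :
    ∀ᶠ a in 𝓝 a₀, ∀ w ∈ T a, 0 < ⟪a.1 + lam • w - y, a₀.1 - p.1⟫ := by
  have hsplit : ∀ x w : V, ⟪x + lam • w - y, a₀.1 - p.1⟫ =
      ⟪x - y, a₀.1 - p.1⟫ - lam * ⟪w, p.1 - a₀.1⟫ := by
    intro x w
    rw [add_sub_right_comm, inner_add_left, real_inner_smul_left, ← neg_sub p.1 a₀.1,
      inner_neg_right w]
    ring
  rw [hsplit, sub_pos, ← lt_div_iff₀' hlam] at hpos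
  obtain ⟨c, hwc, hc⟩ := exists_between hpos
  have hcont : Continuous fun a : V × ℝ ↦ ⟪a.1 - y, a₀.1 - p.1⟫ := by fun_prop
  filter_upwards [hT.eventually_inner_lt hJ hJinj hdom hp hwp hwc,
    hcont.continuousAt.eventually_const_lt ((lt_div_iff₀' hlam).1 hc)] with a hlt hca w hw
  rw [hsplit, sub_pos]
  exact (mul_lt_mul_of_pos_left (hlt w hw) hlam).trans hca

theorem IsMaximalHorizontallyMonotone.mem_of_forall_frequently (hJ : ∀ x, ⟪J x, x⟫ = 0)
    (hJinj : Function.Injective J) (hT : IsMaximalHorizontallyMonotone J T)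
    (hdom : ∀ p, (T p).Nonempty) {lam : ℝ} (hlam : 0 < lam) {a₀ : V × ℝ} {y : V}
    (hfreq : ∀ d, ∃ᶠ a in 𝓝 a₀, ∃ w ∈ T a, ⟪a.1 + lam • w - y, d⟫ ≤ 0) :
    lam⁻¹ • (y - a₀.1) ∈ T a₀ := by
  refine hT.2 _ _ fun p hp wp hwp ↦ ?_
  by_contra! hneg
  have hpos : 0 < ⟪a₀.1 + lam • wp - y, a₀.1 - p.1⟫ := by
    have hscale : a₀.1 + lam • wp - y = -(lam • (lam⁻¹ • (y - a₀.1) - wp)) := by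
      rw [smul_sub, smul_inv_smul₀ hlam.ne']
      abel
    rw [hscale, inner_neg_left, real_inner_smul_left, neg_pos]
    exact mul_neg_of_pos_of_neg hlam hneg
  refine hfreq (a₀.1 - p.1) ?_
  filter_upwards [hT.1.eventually_inner_add_smul_sub_pos hJ hJinj hdom hlam hp hwp hpos]
    with a ha ⟨w, hw, hle⟩
  exact hle.not_gt (ha w hw)

theorem IsMaximalHorizontallyMonotone.exists_add_smul_eq (hJ : ∀ x, ⟪J x, x⟫ = 0)
    (hJinj : Function.Injective J) (hT : IsMaximalHorizontallyMonotone J T)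
    (hdom : ∀ p, (T p).Nonempty) {lam : ℝ} (hlam : 0 < lam) (p₀ : V × ℝ) (y : V) :
    ∃ q, heightDefect J p₀ q = 0 ∧ ∃ w ∈ T q, q.1 + lam • w = y := by
  choose σ hσ using hdom
  let φ : V → V := fun z ↦ (horizontalLift J p₀ z).1 + lam • σ (horizontalLift J p₀ z) - y
  let ρ : ℝ := ‖p₀.1 + lam • σ p₀ - y‖
  have hcoercive : ∀ z, ‖z‖ * (‖z‖ - ρ) ≤ ⟪φ z, z⟫ := by
    intro z
    have hmono := hT.1 p₀ (horizontalLift J p₀ z) (heightDefect_horizontalLift p₀ z) _ (hσ _) _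
      (hσ _)
    rw [← inner_neg_neg, neg_sub, neg_sub, horizontalLift_fst_sub] at hmono
    have hφ : φ z = (p₀.1 + lam • σ p₀ - y) + z + lam • (σ (horizontalLift J p₀ z) - σ p₀) := by
      simp only [φ, horizontalLift, smul_sub]
      abel
    have hcs : -(ρ * ‖z‖) ≤ ⟪p₀.1 + lam • σ p₀ - y, z⟫ := (abs_le.1 (abs_real_inner_le_norm _ _)).1
    rw [hφ, inner_add_left, inner_add_left, real_inner_self_eq_norm_sq, real_inner_smul_left]
    linarith [mul_nonneg hlam.le hmono]
  have hρ : 0 ≤ ρ := norm_nonneg _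
  have hout : ∀ x ∈ Metric.sphere (0 : V) (ρ + 1), ∀ᶠ z in 𝓝 x, 0 < ⟪φ z, z⟫ := by
    intro x hx
    have hx' : ρ < ‖x‖ := by simp [mem_sphere_zero_iff_norm.1 hx]
    filter_upwards [continuous_norm.continuousAt.eventually_const_lt hx'] with z hz
    exact (mul_pos (hρ.trans_lt hz) (sub_pos.2 hz)).trans_le (hcoercive z)
  obtain ⟨x, -, hx⟩ := exists_forall_frequently_inner_nonpos (by positivity) hout
  refine ⟨horizontalLift J p₀ x, heightDefect_horizontalLift p₀ x, _,
    hT.mem_of_forall_frequently hJ hJinj (fun p ↦ ⟨σ p, hσ p⟩) hlam (y := y) fun d ↦ ?_, ?_⟩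
  · exact (continuous_horizontalLift p₀).continuousAt.tendsto.frequently
      ((hx d).mono fun z hz ↦ ⟨_, hσ _, hz⟩)
  · rw [smul_inv_smul₀ hlam.ne', add_sub_cancel]

theorem IsMaximalHorizontallyMonotone.exists_norm_sub_le (hJ : ∀ x, ⟪J x, x⟫ = 0)
    (hJinj : Function.Injective J) (hT : IsMaximalHorizontallyMonotone J T)
    (hdom : ∀ p, (T p).Nonempty) {lam : ℝ} (hlam : 0 < lam) {p : V × ℝ} {w : V} (hw : w ∈ T p)
    (y : V) :
    ∃ q, heightDefect J p q = 0 ∧ ∃ w' ∈ T q,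
      q.1 + lam • w' = y ∧ ‖p.1 - q.1‖ ≤ ‖p.1 + lam • w - y‖ := by
  obtain ⟨q, hpq, w', hw', rfl⟩ := hT.exists_add_smul_eq hJ hJinj hdom hlam p y
  refine ⟨q, hpq, w', hw', rfl, ?_⟩
  rw [add_sub_add_comm, ← smul_sub]
  exact norm_le_norm_add_smul (hT.1 p q hpq w hw w' hw') hlam.le

end HorizontalMonotonicity
section Heisenberg

variable {n : ℕ}

/-- The rotation `(x, y) ↦ (y, -x)` of `V₁`, through which the group law of `ℍⁿ` reads
`(a, t) ∘ (b, s) = (a + b, t + s + 2 * ⟪symplecticRotation n a, b⟫)`. -/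
def symplecticRotation (n : ℕ) : V1 n →L[ℝ] V1 n :=
  (WithLp.prodContinuousLinearEquiv 2 ℝ (E n) (E n)).symm.toContinuousLinearMap ∘L
    (WithLp.sndL 2 ℝ (E n) (E n)).prod (-WithLp.fstL 2 ℝ (E n) (E n))

theorem inner_symplecticRotation (v w : V1 n) :
    ⟪symplecticRotation n v, w⟫ = ⟪v.snd, w.fst⟫ - ⟪v.fst, w.snd⟫ := by
  simp [symplecticRotation, WithLp.prod_inner_apply, sub_eq_add_neg]

theorem inner_symplecticRotation_self (v : V1 n) : ⟪symplecticRotation n v, v⟫ = 0 := by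
  rw [inner_symplecticRotation, real_inner_comm, sub_self]

theorem symplecticRotation_injective : Function.Injective (symplecticRotation n) := by
  refine (injective_iff_map_eq_zero _).2 fun v hv ↦ WithLp.ofLp_injective 2 ?_
  have hv' : (v.snd, -v.fst) = ((0, 0) : E n × E n) := congrArg WithLp.ofLp hv
  rw [Prod.mk.injEq, neg_eq_zero] at hv'
  exact Prod.ext hv'.2 hv'.1

/-- The coordinates `(ξ₁ η, t)` of `η = (x, y, t)`. -/
def heisEquiv (n : ℕ) : Heis n ≃ V1 n × ℝ where
  toFun η := (xi1 η, η.2.2)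
  invFun p := (p.1.fst, p.1.snd, p.2)
  left_inv _ := rfl
  right_inv _ := rfl

theorem mem_Hplane_iff {η ζ : Heis n} :
    ζ ∈ Hplane η ↔ heightDefect (symplecticRotation n) (heisEquiv n η) (heisEquiv n ζ) = 0 := by
  rw [heightDefect, inner_symplecticRotation, sub_sub, sub_eq_zero]
  rfl

theorem IsMaximalHMonotone.isMaximalHorizontallyMonotone {T : Heis n → Set (V1 n)}
    (hT : IsMaximalHMonotone T) :
    IsMaximalHorizontallyMonotone (symplecticRotation n) (T ∘ (heisEquiv n).symm) :=
  ⟨fun _ _ hpq ↦ hT.1 _ _ (mem_Hplane_iff.2 hpq), fun _ v h ↦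
    hT.2 _ v fun ζ hζ ↦ h (heisEquiv n ζ) (mem_Hplane_iff.1 hζ)⟩

theorem hmul_hinv_mem_Hplane_zero {η ζ : Heis n} (hζ : ζ ∈ Hplane η) :
    (hmul (hinv ζ) η).2.2 = 0 := by
  simp only [Hplane, Set.mem_ofPred_eq] at hζ
  simp only [hmul, hinv, inner_neg_left, inner_neg_right, hζ]
  rw [real_inner_comm ζ.1 η.2.1, real_inner_comm ζ.2.1]
  ring

theorem gaugeN_eq_norm_xi1 {η : Heis n} (hη : η.2.2 = 0) : gaugeN η = ‖xi1 η‖ := by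
  have hnorm : ‖η.1‖ ^ 2 + ‖η.2.1‖ ^ 2 = ‖xi1 η‖ ^ 2 := by
    simp [WithLp.prod_norm_sq_eq_of_L2, xi1]
  rw [gaugeN, hη, hnorm, ← pow_mul, zero_pow two_ne_zero, add_zero, ← Real.rpow_natCast,
    ← Real.rpow_mul (norm_nonneg _)]
  norm_num

theorem dH_eq_norm_sub_of_mem_Hplane {η ζ : Heis n} (hζ : ζ ∈ Hplane η) :
    dH η ζ = ‖xi1 η - xi1 ζ‖ := by
  rw [dH, gaugeN_eq_norm_xi1 (hmul_hinv_mem_Hplane_zero hζ), ← neg_add_eq_sub]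
  rfl

theorem dH_zero_left (η : Heis n) : dH (0, 0, 0) η = gaugeN η := by
  simp [dH, gaugeN, hmul, hinv]

theorem hmul_hmul_hinv_cancel (η ζ : Heis n) : hmul η (hmul (hinv η) ζ) = ζ := by
  obtain ⟨x, y, t⟩ := η
  obtain ⟨x', y', t'⟩ := ζ
  simp only [hmul, hinv, Prod.mk.injEq, inner_add_left, inner_add_right, inner_neg_left,
    inner_neg_right]
  exact ⟨by abel, by abel, by ring⟩

theorem IsMaximalHMonotone.exists_mem_resolventQ_dH_le {T : Heis n → Set (V1 n)}
    (hT : IsMaximalHMonotone T) (hdom : ∀ η, (T η).Nonempty) {lam : ℝ} (hlam : 0 < lam)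
    {v : V1 n} {η : Heis n} (hη : η ∈ resolventQ T lam v) (v' : V1 n) :
    ∃ ζ ∈ resolventQ T lam v', dH η ζ ≤ ‖v - v'‖ := by
  obtain ⟨w, hw, rfl⟩ := hη
  obtain ⟨q, hq, w', hw', rfl, hle⟩ := hT.isMaximalHorizontallyMonotone.exists_norm_sub_le
    inner_symplecticRotation_self symplecticRotation_injective (fun _ ↦ hdom _) hlam
    (p := heisEquiv n η) hw v'
  obtain ⟨ζ, rfl⟩ := (heisEquiv n).surjective q
  exact ⟨ζ, ⟨w', hw', rfl⟩, (dH_eq_norm_sub_of_mem_Hplane (mem_Hplane_iff.2 hq)).trans_le hle⟩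

end Heisenberg

/-- Proposition 4.2: the resolventQ of a maximal H-monotone map with full domain is
1-Lipschitz in the Hausdorff metric: every η ∈ Q_λ(v) has a companion η' ∈ Q_λ(v') with
d_H(η,η') ≤ ‖v − v'‖; in particular Q_λ(v') ⊆ Q_λ(v) ∘ B_{ℍⁿ}(0,‖v − v'‖). -/
theorem resolvent_one_lipschitz {n : ℕ} (hn : 1 ≤ n)
    (T : Heis n → Set (V1 n)) (hT : IsMaximalHMonotone T)
    (hdom : ∀ η, (T η).Nonempty) (lam : ℝ) (hlam : 0 < lam) :
    (∀ v v' : V1 n, ∀ η ∈ resolventQ T lam v,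
      ∃ η' ∈ resolventQ T lam v', dH η η' ≤ ‖v - v'‖) ∧
    (∀ v v' : V1 n, resolventQ T lam v' ⊆
      {ζ | ∃ η ∈ resolventQ T lam v, ∃ b : Heis n,
        dH ((0, 0, 0) : Heis n) b ≤ ‖v - v'‖ ∧ ζ = hmul η b}) := by
  refine ⟨fun v v' η hη ↦ hT.exists_mem_resolventQ_dH_le hdom hlam hη v', fun v v' ζ hζ ↦ ?_⟩
  obtain ⟨η, hη, hle⟩ := hT.exists_mem_resolventQ_dH_le hdom hlam hζ v
  refine ⟨η, hη, hmul (hinv η) ζ, ?_, (hmul_hmul_hinv_cancel η ζ).symm⟩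
  rw [dH_zero_left, norm_sub_rev]
  exact hle
end
end

section
/- Fix h ∈ ℝ and define F : ℝ³ → ℝ³ by F(t,ρ,θ) = (t + ρ cos θ, ρ sin θ, h − 2tρ sin θ), i.e. F(t,ρ,θ) = (0,0,h) ∘ exp(t·(1,0)) ∘ exp(ρ·(cos θ, sin θ)) in the Heisenberg group ℍ¹. Then the absolute value of the determinant of the Jacobian of F equals |det JF(t,ρ,θ)| = 2ρ² |sin θ| for all (t,ρ,θ). -/
noncomputable section

/-- The map F(t,ρ,θ) = (0,0,h) ∘ exp(t·(1,0)) ∘ exp(ρ·(cos θ, sin θ)) in ℍ¹, written in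
coordinates q = (t, ρ, θ): F(q) = (t + ρ cos θ, ρ sin θ, h − 2tρ sin θ). -/
def Fmap (h : ℝ) (q : Fin 3 → ℝ) : Fin 3 → ℝ :=
  ![q 0 + q 1 * Real.cos (q 2), q 1 * Real.sin (q 2), h - 2 * q 0 * q 1 * Real.sin (q 2)]

theorem of_fderiv_apply_single_eq_toMatrix' {𝕜 ι κ : Type*} [NontriviallyNormedField 𝕜]
    [Fintype ι] [DecidableEq ι] [Finite κ] {f : (ι → 𝕜) → κ → 𝕜}
    {f' : (ι → 𝕜) →L[𝕜] κ → 𝕜} {p : ι → 𝕜} (hf : HasFDerivAt f f' p) :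
    Matrix.of (fun i j => fderiv 𝕜 (fun q => f q i) p (Pi.single j 1)) =
      LinearMap.toMatrix' (f' : (ι → 𝕜) →ₗ[𝕜] κ → 𝕜) := by
  cases nonempty_fintype κ
  ext i j
  simp [(hasFDerivAt_pi'.mp hf i).fderiv, LinearMap.toMatrix'_apply]

/-- The Jacobian matrix of `Fmap h` at `p = (t, ρ, θ)`: rows are indexed by the components of
`Fmap h`, columns by the variables. It does not involve `h`, which only translates the last
component. -/
def jacobianFmap (p : Fin 3 → ℝ) : Matrix (Fin 3) (Fin 3) ℝ :=
  !![1, Real.cos (p 2), -(p 1 * Real.sin (p 2));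
    0, Real.sin (p 2), p 1 * Real.cos (p 2);
    -(2 * p 1 * Real.sin (p 2)), -(2 * p 0 * Real.sin (p 2)), -(2 * p 0 * p 1 * Real.cos (p 2))]

theorem hasFDerivAt_Fmap (h : ℝ) (p : Fin 3 → ℝ) :
    HasFDerivAt (Fmap h) (jacobianFmap p).toLin'.toContinuousLinearMap p := by
  have ht := hasFDerivAt_apply (𝕜 := ℝ) (0 : Fin 3) p
  have hρ := hasFDerivAt_apply (𝕜 := ℝ) (1 : Fin 3) p
  have hθ := hasFDerivAt_apply (𝕜 := ℝ) (2 : Fin 3) p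
  rw [hasFDerivAt_pi', Fin.forall_fin_succ, Fin.forall_fin_two]
  refine ⟨(ht.add (hρ.mul hθ.cos)).congr_fderiv ?_, (hρ.mul hθ.sin).congr_fderiv ?_,
    ((((ht.const_mul 2).mul hρ).mul hθ.sin).const_sub h).congr_fderiv ?_⟩ <;>
  · ext v
    simp only [jacobianFmap, ContinuousLinearMap.comp_apply, ContinuousLinearMap.proj_apply,
      LinearMap.coe_toContinuousLinearMap', Matrix.toLin'_apply, Matrix.mulVec, dotProduct,
      Fin.sum_univ_three, Fin.succ_zero_eq_one, Fin.succ_one_eq_two, Matrix.of_apply,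
      Matrix.cons_val, Pi.mul_apply, add_apply, neg_apply, smul_apply, smul_eq_mul]
    ring

/- The factors `ρ` and `-2 ρ sin θ` are the determinants of polar coordinates
`(ρ, θ) ↦ (x, y) = (ρ cos θ, ρ sin θ)` and of `(t, x, y) ↦ (t + x, y, h - 2 t y)`, whose
composition is `Fmap h`. -/
theorem det_jacobianFmap (p : Fin 3 → ℝ) :
    (jacobianFmap p).det = -(2 * p 1 ^ 2 * Real.sin (p 2)) := by
  simp only [jacobianFmap, Matrix.det_fin_three, Matrix.of_apply, Matrix.cons_val]
  linear_combination -(2 * p 1 ^ 2 * Real.sin (p 2)) * Real.sin_sq_add_cos_sq (p 2)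

/-- The Jacobian determinant of F(t,ρ,θ) = (t + ρ cos θ, ρ sin θ, h − 2tρ sin θ) satisfies
|det JF(t,ρ,θ)| = 2ρ²|sin θ|. -/
theorem abs_det_jacobian_Fmap (h : ℝ) (p : Fin 3 → ℝ) :
    |(Matrix.of fun i j : Fin 3 =>
        fderiv ℝ (fun q : Fin 3 → ℝ => Fmap h q i) p (Pi.single j 1)).det| =
      2 * (p 1) ^ 2 * |Real.sin (p 2)| := by
  have jacobian_eq := of_fderiv_apply_single_eq_toMatrix' (hasFDerivAt_Fmap h p)
  rw [LinearMap.coe_toContinuousLinearMap, LinearMap.toMatrix'_toLin'] at jacobian_eq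
  rw [jacobian_eq, det_jacobianFmap, abs_neg, abs_mul, abs_of_nonneg (by positivity)]
end
end
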